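/- For every ε > 0 there exist a finite set S of points in the plane in convex position and in general position and two points u, v ∈ S such that every path between u and v in ΘΘ₆(S) has length at least (4 − ε)·|uv|. In particular, there is no t < 4 such that ΘΘ₆(S) is a t-spanner for every finite set S in convex and general position. -/

import Mathlib

/-!
The extremal sets are short spirals: every point sees all earlier ones in the interior of a single
cone, this cone turns by `π/3` from each point to the next, and the nearest earlier point in
projective distance is the predecessor. For at most seven points the cones are distinct enough that
each point selects its successor in `Θ₆`. The successor then keeps only this incoming edge among
those from earlier points, so every edge of `ΘΘ₆` joins consecutive points and each path from the
first point to the last one traverses the whole spiral.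

A spiral of five points close to the centre and four consecutive vertices of a regular hexagon of
side `1` has four steps of length almost `1`, while its endpoints are also almost at distance `1`.
-/

open Real

noncomputable section

/-- Counterclockwise angle in `[0, 2π)` from the positive x-axis to the direction of `z`. -/
def argIn (z : ℂ) : ℝ := if 0 ≤ Complex.arg z then Complex.arg z else Complex.arg z + 2 * π

/-- The half-open cone `C_i(u)` with apex `u`: points `p ≠ u` whose direction from `u` has
counterclockwise angle in `[(i-1)π/3, iπ/3)`. -/
def cone (i : ℕ) (u : ℂ) : Set ℂ :=
  {p | p ≠ u ∧ argIn (p - u) ∈ Set.Ico (((i : ℝ) - 1) * (π / 3)) ((i : ℝ) * (π / 3))}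

/-- The index `i ∈ {1, …, 6}` of the cone of `u` containing `v`. -/
def coneIdx (u v : ℂ) : ℕ := (⌊argIn (v - u) / (π / 3)⌋).toNat + 1

/-- The angle of the bisector ray of the cone of `u` containing `v`. -/
def bisAngle (u v : ℂ) : ℝ := ((coneIdx u v : ℝ) - 1) * (π / 3) + π / 6

/-- The projective distance from `u` to `v`: the Euclidean distance from `u` to the
orthogonal projection of `v` onto the bisector ray of the cone of `u` containing `v`. -/
def projDist (u v : ℂ) : ℝ :=
  ((v - u) * Complex.exp (-(Complex.I * (bisAngle u v : ℂ)))).re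

/-- `S` is in general position: no two points of `S` lie on a common line parallel to one of
the six rays from the origin at angles `jπ/3`. -/
def GenPos (S : Finset ℂ) : Prop :=
  ∀ u ∈ S, ∀ v ∈ S, u ≠ v → ∀ j : ℕ, argIn (v - u) ≠ (j : ℝ) * (π / 3)

/-- `S` is in convex position: every point of `S` is an extreme point of the convex hull. -/
def ConvexPos (S : Finset ℂ) : Prop :=
  ∀ p ∈ S, p ∈ Set.extremePoints ℝ (convexHull ℝ (S : Set ℂ))

/-- `u → v` is a directed edge of `Θ₆(S)`: `v` minimizes the projective distance from `u`
among the points of `S` in the cone of `u` containing `v`. -/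
def ThetaEdge (S : Finset ℂ) (u v : ℂ) : Prop :=
  u ∈ S ∧ v ∈ S ∧ v ≠ u ∧
    ∀ w ∈ S, w ∈ cone (coneIdx u v) u → projDist u v ≤ projDist u w

/-- `u → v` is a directed edge of `ΘΘ₆(S)`: it is an edge of `Θ₆(S)` and among all incoming
`Θ₆`-edges `w → v` with `w` in the same cone of `v` as `u`, it minimizes `‖wv‖`. -/
def ThetaThetaEdge (S : Finset ℂ) (u v : ℂ) : Prop :=
  ThetaEdge S u v ∧
    ∀ w, ThetaEdge S w v → coneIdx v w = coneIdx v u → projDist u v ≤ projDist w v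

/-- Undirected adjacency in `ΘΘ₆(S)`: paths may use edges in either direction. -/
def TTAdj (S : Finset ℂ) (u v : ℂ) : Prop := ThetaThetaEdge S u v ∨ ThetaThetaEdge S v u

/-- `p` is a path between `u` and `v` with respect to the adjacency relation `A`. -/
def IsPath (A : ℂ → ℂ → Prop) (u v : ℂ) (p : List ℂ) : Prop :=
  p.Chain' A ∧ p.head? = some u ∧ p.getLast? = some v

/-- The Euclidean length of the polygonal path through the points of `p`. -/
def pathLength (p : List ℂ) : ℝ := (List.zipWith dist p p.tail).sum

/-! ### Angles and cone indices -/

lemma argIn_nonneg (z : ℂ) : 0 ≤ argIn z := by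
  unfold argIn
  split_ifs with h
  · exact h
  · linarith [Complex.neg_pi_lt_arg z, pi_pos]

lemma argIn_ofReal_mul_exp {r θ : ℝ} (hr : 0 < r) (hθ : θ ∈ Set.Ico 0 (2 * π)) :
    argIn (r * Complex.exp (θ * Complex.I)) = θ := by
  have harg : Complex.arg (r * Complex.exp (θ * Complex.I)) = toIocMod two_pi_pos (-π) θ := by
    rw [Complex.arg_real_mul _ hr, Complex.arg_exp_mul_I]
  obtain ⟨hθ₀, hθ₁⟩ := hθ
  rcases le_or_gt θ π with hle | hlt
  · have hmod : toIocMod two_pi_pos (-π) θ = θ :=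
      (toIocMod_eq_self _).2 ⟨by linarith [pi_pos], by linarith⟩
    rw [argIn, harg, hmod, if_pos hθ₀]
  · have hmod : toIocMod two_pi_pos (-π) θ = θ - 2 * π := by
      rw [← toIocMod_sub, toIocMod_eq_self]
      exact ⟨by linarith, by linarith⟩
    rw [argIn, harg, hmod, if_neg (by linarith), sub_add_cancel]

lemma coneIdx_eq_succ_iff {u v : ℂ} {k : ℕ} :
    coneIdx u v = k + 1 ↔ argIn (v - u) ∈ Set.Ico (k * (π / 3)) ((k + 1) * (π / 3)) := by
  have hpi : 0 < π / 3 := by positivity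
  rw [coneIdx, Nat.add_right_cancel_iff, Int.floor_toNat,
    Nat.floor_eq_iff (div_nonneg (argIn_nonneg _) hpi.le), le_div_iff₀ hpi, div_lt_iff₀ hpi,
    Set.mem_Ico]

lemma mem_cone_coneIdx_iff {u v w : ℂ} :
    w ∈ cone (coneIdx u v) u ↔ w ≠ u ∧ coneIdx u w = coneIdx u v := by
  obtain ⟨k, hk⟩ : ∃ k, coneIdx u v = k + 1 := ⟨_, rfl⟩
  rw [hk, coneIdx_eq_succ_iff, cone, Set.mem_ofPred_eq]
  push_cast
  rw [add_sub_cancel_right]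

/-! ### Hexagonal coordinates -/

/-- The primitive sixth root of unity `e^{iπ/3}`: multiplication by it maps each cone with apex `0`
to the next one. -/
def hexUnit : ℂ := Complex.exp ((π / 3 : ℝ) * Complex.I)

lemma hexUnit_re : hexUnit.re = 1 / 2 := by
  rw [hexUnit, Complex.exp_ofReal_mul_I_re, cos_pi_div_three]

lemma hexUnit_im : hexUnit.im = √3 / 2 := by
  rw [hexUnit, Complex.exp_ofReal_mul_I_im, sin_pi_div_three]

lemma norm_hexUnit : ‖hexUnit‖ = 1 := Complex.norm_exp_ofReal_mul_I _

lemma hexUnit_pow (k : ℕ) : hexUnit ^ k = Complex.exp ((k * (π / 3) : ℝ) * Complex.I) := by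
  rw [hexUnit, ← Complex.exp_nat_mul]
  push_cast
  ring_nf

lemma hexUnit_pow_three : hexUnit ^ 3 = -1 := by
  rw [hexUnit_pow, Nat.cast_ofNat, mul_div_cancel₀ π three_ne_zero, Complex.exp_pi_mul_I]

lemma hexUnit_pow_six : hexUnit ^ 6 = 1 := by
  rw [show 6 = 3 * 2 from rfl, pow_mul, hexUnit_pow_three]
  norm_num

lemma hexUnit_sq : hexUnit ^ 2 = hexUnit - 1 := by
  have h3 : √3 * √3 = 3 := Real.mul_self_sqrt (by norm_num)
  apply Complex.ext <;>
    simp only [sq, Complex.mul_re, Complex.mul_im, Complex.sub_re, Complex.sub_im, hexUnit_re,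
      hexUnit_im, Complex.one_re, Complex.one_im] <;>
    linarith

lemma add_mul_hexUnit_re (a b : ℝ) : (a + b * hexUnit : ℂ).re = a + b / 2 := by
  simp [hexUnit_re, div_eq_mul_inv]

lemma add_mul_hexUnit_im (a b : ℝ) : (a + b * hexUnit : ℂ).im = √3 / 2 * b := by
  simp [hexUnit_im, mul_comm]

/-- The coordinates `(a, b) ↦ a + b e^{iπ/3}` of the plane, in which the positive quadrant is the
interior of the first cone with apex `0`. -/
def hexPoint : (ℝ × ℝ) ≃ₗ[ℝ] ℂ where
  toFun c := c.1 + c.2 * hexUnit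
  map_add' c d := by
    simp only [Prod.fst_add, Prod.snd_add]
    push_cast
    ring
  map_smul' r c := by
    simp only [Prod.smul_fst, Prod.smul_snd, smul_eq_mul, RingHom.id_apply, Complex.real_smul]
    push_cast
    ring
  invFun z := (z.re - z.im / √3, 2 * z.im / √3)
  left_inv c := by
    beta_reduce
    rw [add_mul_hexUnit_re, add_mul_hexUnit_im]
    ext <;> field_simp
    ring
  right_inv z := by
    apply Complex.ext
    · rw [add_mul_hexUnit_re]
      ring
    · rw [add_mul_hexUnit_im]
      field_simp

lemma hexPoint_apply (c : ℝ × ℝ) : hexPoint c = c.1 + c.2 * hexUnit := rfl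

lemma hexPoint_re (c : ℝ × ℝ) : (hexPoint c).re = c.1 + c.2 / 2 := add_mul_hexUnit_re _ _

lemma hexPoint_im (c : ℝ × ℝ) : (hexPoint c).im = √3 / 2 * c.2 := add_mul_hexUnit_im _ _

lemma norm_hexPoint_le (c : ℝ × ℝ) : ‖hexPoint c‖ ≤ |c.1| + |c.2| := by
  refine (norm_add_le _ _).trans_eq ?_
  rw [norm_mul, norm_hexUnit, mul_one, Complex.norm_real, Complex.norm_real, norm_eq_abs,
    norm_eq_abs]

lemma max_le_norm_hexPoint {c : ℝ × ℝ} (h₁ : 0 ≤ c.1) (h₂ : 0 ≤ c.2) :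
    max c.1 c.2 ≤ ‖hexPoint c‖ := by
  have h3 : √3 ^ 2 = 3 := Real.sq_sqrt (by norm_num)
  have hnorm : ‖hexPoint c‖ ^ 2 = c.1 ^ 2 + c.1 * c.2 + c.2 ^ 2 := by
    rw [Complex.sq_norm, Complex.normSq_apply, hexPoint_re, hexPoint_im]
    linear_combination c.2 ^ 2 / 4 * h3
  refine max_le ?_ ?_ <;> refine le_of_sq_le_sq ?_ (norm_nonneg _) <;> nlinarith [mul_nonneg h₁ h₂]

/-- Rotation by `-π/3` in hexagonal coordinates. -/
def hexRotate (c : ℝ × ℝ) : ℝ × ℝ := (c.1 + c.2, -c.1)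

lemma hexUnit_mul_hexPoint_hexRotate (c : ℝ × ℝ) :
    hexUnit * hexPoint (hexRotate c) = hexPoint c := by
  simp only [hexPoint_apply, hexRotate]
  push_cast
  linear_combination (-c.1 : ℂ) * hexUnit_sq

lemma hexUnit_pow_mul_hexPoint_hexRotate_iterate (k : ℕ) (c : ℝ × ℝ) :
    hexUnit ^ k * hexPoint (hexRotate^[k] c) = hexPoint c := by
  induction k generalizing c with
  | zero => simp
  | succ k ih =>
    rw [pow_succ', mul_assoc, Function.iterate_succ_apply, ih, hexUnit_mul_hexPoint_hexRotate]

lemma arg_hexPoint_mem_Ioo {c : ℝ × ℝ} (h₁ : 0 < c.1) (h₂ : 0 < c.2) :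
    Complex.arg (hexPoint c) ∈ Set.Ioo 0 (π / 3) := by
  have him : 0 < (hexPoint c).im := by rw [hexPoint_im]; positivity
  have hre : 0 < (hexPoint c).re := by rw [hexPoint_re]; positivity
  have hpos : 0 < Complex.arg (hexPoint c) :=
    (Complex.arg_nonneg_iff.2 him.le).lt_of_ne' fun h => him.ne' (Complex.arg_eq_zero_iff.1 h).2
  refine ⟨hpos, ?_⟩
  have htan : tan (Complex.arg (hexPoint c)) < tan (π / 3) := by
    rw [Complex.tan_arg, tan_pi_div_three, hexPoint_re, hexPoint_im, div_lt_iff₀ (by positivity)]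
    nlinarith [mul_pos (Real.sqrt_pos.2 (zero_lt_three' ℝ)) h₁]
  by_contra! hle
  refine htan.not_ge ((Real.strictMonoOn_tan.le_iff_le ?_ ?_).2 hle)
  · constructor <;> linarith [pi_pos]
  · exact abs_lt.1 (Complex.abs_arg_lt_pi_div_two_iff.2 (.inl hre))

/-! ### Open cones -/

/-- The interior of the cone `C_{k+1}(p)`, with `k` read modulo `6`. -/
def openCone (k : ℕ) (p : ℂ) : Set ℂ :=
  {q | ∃ c : ℝ × ℝ, 0 < c.1 ∧ 0 < c.2 ∧ q - p = hexUnit ^ k * hexPoint c}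

section openCone

variable {p q : ℂ} {k : ℕ}

lemma mem_openCone_mod_six (h : q ∈ openCone k p) : q ∈ openCone (k % 6) p := by
  obtain ⟨c, h₁, h₂, hqp⟩ := h
  exact ⟨c, h₁, h₂, by rw [hqp, pow_eq_pow_mod k hexUnit_pow_six]⟩

lemma sub_swap_eq_hexUnit_pow_mul {z : ℂ} (h : q - p = hexUnit ^ k * z) :
    p - q = hexUnit ^ (k + 3) * z := by
  rw [pow_add, hexUnit_pow_three, ← neg_sub, h]
  ring

lemma mem_openCone_add_three (h : q ∈ openCone k p) : p ∈ openCone (k + 3) q := by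
  obtain ⟨c, h₁, h₂, hqp⟩ := h
  exact ⟨c, h₁, h₂, sub_swap_eq_hexUnit_pow_mul hqp⟩

lemma ne_of_mem_openCone (h : q ∈ openCone k p) : q ≠ p := by
  rintro rfl
  obtain ⟨c, h₁, -, hc⟩ := h
  have hc0 : hexPoint c = 0 := by simpa [hexUnit] using hc.symm
  simp [hexPoint.map_eq_zero_iff.1 hc0] at h₁

lemma argIn_mem_Ioo_of_mem_openCone (h : q ∈ openCone k p) :
    argIn (q - p) ∈ Set.Ioo (((k % 6 : ℕ) : ℝ) * (π / 3)) (((k % 6 : ℕ) + 1) * (π / 3)) := by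
  obtain ⟨c, h₁, h₂, hqp⟩ := mem_openCone_mod_six h
  have hk : ((k % 6 : ℕ) : ℝ) + 1 ≤ 6 := mod_cast Nat.mod_lt k (by norm_num)
  obtain ⟨harg₀, harg₁⟩ := arg_hexPoint_mem_Ioo h₁ h₂
  have hc : 0 < ‖hexPoint c‖ := h₁.trans_le ((le_max_left _ _).trans
    (max_le_norm_hexPoint h₁.le h₂.le))
  have hpolar : q - p = ‖hexPoint c‖ *
      Complex.exp (((k % 6 : ℕ) * (π / 3) + Complex.arg (hexPoint c) : ℝ) * Complex.I) := by
    rw [hqp, hexUnit_pow, Complex.ofReal_add, add_mul, Complex.exp_add, mul_left_comm,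
      Complex.norm_mul_exp_arg_mul_I]
  rw [hpolar, argIn_ofReal_mul_exp hc ⟨by positivity, by nlinarith [pi_pos]⟩]
  constructor <;> linarith

lemma coneIdx_of_mem_openCone (h : q ∈ openCone k p) : coneIdx p q = k % 6 + 1 :=
  coneIdx_eq_succ_iff.2 (Set.Ioo_subset_Ico_self (argIn_mem_Ioo_of_mem_openCone h))

lemma argIn_ne_of_mem_openCone (h : q ∈ openCone k p) (j : ℕ) :
    argIn (q - p) ≠ j * (π / 3) := by
  intro hj
  obtain ⟨hlt, hgt⟩ := argIn_mem_Ioo_of_mem_openCone h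
  rw [hj, mul_lt_mul_iff_left₀ (by positivity)] at hlt hgt
  norm_cast at hlt hgt
  lia

lemma projDist_of_sub_eq {c : ℝ × ℝ} (h₁ : 0 < c.1) (h₂ : 0 < c.2)
    (hqp : q - p = hexUnit ^ k * hexPoint c) : projDist p q = √3 / 2 * (c.1 + c.2) := by
  have hbis : bisAngle p q = (k % 6 : ℕ) * (π / 3) + π / 6 := by
    rw [bisAngle, coneIdx_of_mem_openCone ⟨c, h₁, h₂, hqp⟩]
    push_cast
    ring
  have hrot : (q - p) * Complex.exp (-(Complex.I * (bisAngle p q : ℂ))) =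
      hexPoint c * Complex.exp ((-(π / 6) : ℝ) * Complex.I) := by
    rw [hqp, pow_eq_pow_mod k hexUnit_pow_six, hexUnit_pow, mul_right_comm, ← Complex.exp_add,
      mul_comm, hbis]
    push_cast
    ring_nf
  rw [projDist, hrot, Complex.mul_re, Complex.exp_ofReal_mul_I_re, Complex.exp_ofReal_mul_I_im,
    cos_neg, sin_neg, cos_pi_div_six, sin_pi_div_six, hexPoint_re, hexPoint_im]
  ring

lemma projDist_comm_of_mem_openCone (h : q ∈ openCone k p) : projDist q p = projDist p q := by
  obtain ⟨c, h₁, h₂, hqp⟩ := h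
  rw [projDist_of_sub_eq h₁ h₂ hqp,
    projDist_of_sub_eq h₁ h₂ (sub_swap_eq_hexUnit_pow_mul hqp)]

end openCone

lemma hexPoint_sub_eq (k : ℕ) (c d : ℝ × ℝ) :
    hexPoint d - hexPoint c = hexUnit ^ k * hexPoint (hexRotate^[k] (d - c)) := by
  rw [hexUnit_pow_mul_hexPoint_hexRotate_iterate, map_sub]

/-! ### Edges of `Θ₆` and `ΘΘ₆` -/

section Edges

variable {S : Finset ℂ} {p q r : ℂ}

lemma thetaEdge_of_unique (hp : p ∈ S) (hq : q ∈ S) (hqp : q ≠ p)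
    (hunique : ∀ r ∈ S, r ≠ p → coneIdx p r = coneIdx p q → r = q) : ThetaEdge S p q := by
  refine ⟨hp, hq, hqp, fun r hr hrcone => ?_⟩
  obtain ⟨hrp, hidx⟩ := mem_cone_coneIdx_iff.1 hrcone
  rw [hunique r hr hrp hidx]

lemma not_ttAdj_of_thetaEdge (hrq : ThetaEdge S r q)
    (hidx : coneIdx q r = coneIdx q p) (hout : projDist q r < projDist q p)
    (hin : projDist r q < projDist p q) : ¬ TTAdj S p q := by
  have hr : r ∈ cone (coneIdx q p) q := mem_cone_coneIdx_iff.2 ⟨hrq.2.2.1.symm, hidx⟩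
  rintro (⟨-, hmin⟩ | ⟨⟨-, -, -, hmin⟩, -⟩)
  · exact hin.not_ge (hmin r hrq hidx)
  · exact hout.not_ge (hmin r hrq.1 hr)

lemma TTAdj.mem (h : TTAdj S p q) : p ∈ S ∧ q ∈ S := by
  rcases h with ⟨⟨hp, hq, -⟩, -⟩ | ⟨⟨hq, hp, -⟩, -⟩ <;> exact ⟨hp, hq⟩

end Edges

/-! ### Lengths of paths -/

lemma pathLength_cons_cons (x y : ℂ) (t : List ℂ) :
    pathLength (x :: y :: t) = dist x y + pathLength (y :: t) := by
  simp [pathLength]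

lemma sub_le_pathLength {A : ℂ → ℂ → Prop} {f : ℂ → ℝ}
    (hf : ∀ x y, A x y → f y - f x ≤ dist x y) {u v : ℂ} {p : List ℂ} (hp : IsPath A u v p) :
    f v - f u ≤ pathLength p := by
  obtain ⟨hchain, hhead, hlast⟩ := hp
  induction p generalizing u with
  | nil => simp at hhead
  | cons x t ih =>
    obtain rfl : x = u := by simpa using hhead
    cases t with
    | nil =>
      obtain rfl : x = v := by simpa using hlast
      simp [pathLength]
    | cons y t =>
      obtain ⟨hxy, hchain⟩ := List.isChain_cons_cons.1 hchain
      have htail : f v - f y ≤ pathLength (y :: t) := ih hchain rfl (by simpa using hlast)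
      rw [pathLength_cons_cons]
      linarith [hf x y hxy]

lemma sum_dist_le_pathLength {n : ℕ} {x : Fin (n + 1) → ℂ} (hx : x.Injective)
    {A : ℂ → ℂ → Prop} (hA : ∀ y z, A y z → ∃ i j, x i = y ∧ x j = z ∧ (j : ℕ) ≤ i + 1)
    {p : List ℂ} (hp : IsPath A (x 0) (x (Fin.last n)) p) :
    ∑ i : Fin n, dist (x i.castSucc) (x i.succ) ≤ pathLength p := by
  let F : Fin (n + 1) → ℝ := Fin.partialSum fun i : Fin n => dist (x i.castSucc) (x i.succ)
  have hsucc (i : Fin n) : F i.succ = F i.castSucc + dist (x i.castSucc) (x i.succ) :=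
    Fin.partialSum_succ _ _
  have hmono : Monotone F := Fin.monotone_iff_le_succ.2 fun i => by
    rw [hsucc]
    exact le_add_of_nonneg_right dist_nonneg
  have hextend (i : Fin (n + 1)) : Function.extend x F 0 (x i) = F i := hx.extend_apply _ _ _
  have hstep (y z : ℂ) (hyz : A y z) :
      Function.extend x F 0 z - Function.extend x F 0 y ≤ dist y z := by
    obtain ⟨i, j, rfl, rfl, hji⟩ := hA y z hyz
    rw [hextend, hextend]
    rcases le_or_gt j i with hle | hlt
    · exact (sub_nonpos.2 (hmono hle)).trans dist_nonneg
    · obtain ⟨k, rfl⟩ := Fin.exists_succ_eq.2 (Fin.ne_zero_of_lt hlt)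
      rw [Fin.val_succ, Nat.add_le_add_iff_right] at hji
      obtain rfl : i = k.castSucc :=
        Fin.ext (le_antisymm (Nat.le_of_lt_succ hlt) hji)
      rw [hsucc, add_sub_cancel_left]
  have hlast : F (Fin.last n) = ∑ i : Fin n, dist (x i.castSucc) (x i.succ) := by
    simp [F, Fin.partialSum, List.take_of_length_le, List.sum_ofFn]
  have hzero : F 0 = 0 := Fin.partialSum_zero _
  simpa [hextend, hlast, hzero] using sub_le_pathLength hstep hp

/-! ### Spirals -/

/-- A spiral: each point sees all earlier ones in a single open cone, which turns by `π/3` from one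
point to the next, and the nearest of them in projective distance is its predecessor. -/
structure IsSpiral {n : ℕ} (x : Fin (n + 1) → ℂ) : Prop where
  mem_openCone : ∀ ⦃i j : Fin (n + 1)⦄, i < j → x i ∈ openCone j (x j)
  projDist_lt : ∀ ⦃i j : Fin n⦄, i < j →
    projDist (x j.succ) (x j.castSucc) < projDist (x j.succ) (x i.castSucc)

namespace IsSpiral

variable {n : ℕ} {x : Fin (n + 1) → ℂ}

lemma injective (hx : IsSpiral x) : x.Injective :=
  Function.Injective.of_lt_imp_ne fun _ _ hij => ne_of_mem_openCone (hx.mem_openCone hij)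

lemma genPos (hx : IsSpiral x) : GenPos (Finset.univ.image x) := by
  simp only [GenPos, Finset.mem_image, Finset.mem_univ, true_and, forall_exists_index,
    forall_apply_eq_imp_iff]
  intro i j hij
  rcases lt_or_gt_of_ne (ne_of_apply_ne x hij) with hlt | hgt
  · exact argIn_ne_of_mem_openCone (mem_openCone_add_three (hx.mem_openCone hlt))
  · exact argIn_ne_of_mem_openCone (hx.mem_openCone hgt)

lemma coneIdx_of_lt (hx : IsSpiral x) {i j : Fin (n + 1)} (h : i < j) :
    coneIdx (x j) (x i) = j % 6 + 1 :=
  coneIdx_of_mem_openCone (hx.mem_openCone h)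

lemma coneIdx_of_gt (hx : IsSpiral x) {i j : Fin (n + 1)} (h : i < j) :
    coneIdx (x i) (x j) = (j + 3) % 6 + 1 :=
  coneIdx_of_mem_openCone (mem_openCone_add_three (hx.mem_openCone h))

lemma thetaEdge_succ (hx : IsSpiral x) (hn : n ≤ 6) (i : Fin n) :
    ThetaEdge (Finset.univ.image x) (x i.castSucc) (x i.succ) := by
  refine thetaEdge_of_unique (by simp) (by simp) (hx.injective.ne i.castSucc_lt_succ.ne') ?_
  simp only [Finset.mem_image, Finset.mem_univ, true_and, forall_exists_index,
    forall_apply_eq_imp_iff]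
  intro j hji hidx
  rw [hx.coneIdx_of_gt i.castSucc_lt_succ] at hidx
  rcases lt_or_gt_of_ne (ne_of_apply_ne x hji) with hlt | hgt
  · rw [hx.coneIdx_of_lt hlt, Fin.val_castSucc, Fin.val_succ] at hidx
    lia
  · rw [hx.coneIdx_of_gt hgt, Fin.val_succ] at hidx
    rw [Fin.lt_def, Fin.val_castSucc] at hgt
    exact congrArg x (Fin.ext (by rw [Fin.val_succ]; lia))

lemma not_ttAdj (hx : IsSpiral x) (hn : n ≤ 6) {i j : Fin n} (hij : i < j) :
    ¬ TTAdj (Finset.univ.image x) (x i.castSucc) (x j.succ) := by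
  have hi : i.castSucc < j.succ := Fin.castSucc_lt_succ_iff.2 hij.le
  have hj : j.castSucc < j.succ := j.castSucc_lt_succ
  refine not_ttAdj_of_thetaEdge (hx.thetaEdge_succ hn j) ?_ (hx.projDist_lt hij) ?_
  · rw [hx.coneIdx_of_lt hi, hx.coneIdx_of_lt hj]
  · rw [projDist_comm_of_mem_openCone (hx.mem_openCone hi),
      projDist_comm_of_mem_openCone (hx.mem_openCone hj)]
    exact hx.projDist_lt hij

lemma exists_le_succ_of_ttAdj (hx : IsSpiral x) (hn : n ≤ 6) {y z : ℂ}
    (h : TTAdj (Finset.univ.image x) y z) :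
    ∃ i j, x i = y ∧ x j = z ∧ (j : ℕ) ≤ i + 1 := by
  obtain ⟨⟨i, rfl⟩, ⟨j, rfl⟩⟩ : (∃ i, x i = y) ∧ ∃ j, x j = z := by simpa using h.mem
  refine ⟨i, j, rfl, rfl, ?_⟩
  by_contra! hlt
  have hj : j ≠ 0 := by rintro rfl; exact absurd hlt (by simp)
  have hi : i ≠ Fin.last n := by rintro rfl; exact absurd hlt (by rw [Fin.val_last]; lia)
  obtain ⟨k, rfl⟩ := Fin.exists_succ_eq.2 hj
  obtain ⟨l, rfl⟩ := Fin.exists_castSucc_eq.2 hi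
  rw [Fin.val_succ, Fin.val_castSucc, Nat.add_lt_add_iff_right] at hlt
  exact hx.not_ttAdj hn hlt h

lemma sum_dist_le_pathLength (hx : IsSpiral x) (hn : n ≤ 6) {p : List ℂ}
    (hp : IsPath (TTAdj (Finset.univ.image x)) (x 0) (x (Fin.last n)) p) :
    ∑ i : Fin n, dist (x i.castSucc) (x i.succ) ≤ pathLength p :=
  _root_.sum_dist_le_pathLength hx.injective (fun _ _ => hx.exists_le_succ_of_ttAdj hn) hp

end IsSpiral

/-! ### Convex position -/

lemma lt_of_mem_convexHull {E : Type*} [AddCommGroup E] [Module ℝ E] {s : Set E} {p z : E}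
    (f : E →ₗ[ℝ] ℝ) (h : ∀ q ∈ s, q ≠ p → f q < f p) (hz : z ∈ convexHull ℝ s) (hzp : z ≠ p) :
    f z < f p := by
  have hhalf : convexHull ℝ (s \ {p}) ⊆ {w | f w < f p} :=
    convexHull_min (fun q hq => h q hq.1 hq.2) (convex_halfSpace_lt f.isLinear _)
  have hz' : z ∈ convexHull ℝ (insert p (s \ {p})) :=
    convexHull_mono (fun q hq => by by_cases q = p <;> simp_all) hz
  rcases (s \ {p}).eq_empty_or_nonempty with hempty | hne
  · simp [hempty, hzp] at hz'
  · rw [convexHull_insert hne, convexJoin_singleton_left, Set.mem_iUnion₂] at hz'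
    obtain ⟨y, hy, a, b, -, hb, hab, rfl⟩ := hz'
    have hb' : 0 < b := hb.lt_of_ne' (by rintro rfl; simp_all)
    have hy' : f y < f p := hhalf hy
    calc f (a • p + b • y) = a * f p + b * f y := by simp
      _ < a * f p + b * f p := by gcongr
      _ = f p := by rw [← add_mul, hab, one_mul]

lemma mem_extremePoints_convexHull_of_forall_lt {E : Type*} [AddCommGroup E] [Module ℝ E]
    {s : Set E} {p : E} (hp : p ∈ s) (f : E →ₗ[ℝ] ℝ) (h : ∀ q ∈ s, q ≠ p → f q < f p) :
    p ∈ Set.extremePoints ℝ (convexHull ℝ s) := by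
  rw [(convex_convexHull ℝ s).mem_extremePoints_iff_mem_sdiff_convexHull_sdiff]
  refine ⟨subset_convexHull ℝ s hp, fun hmem => lt_irrefl (f p) ?_⟩
  exact convexHull_min (fun z hz => lt_of_mem_convexHull f h hz.1 hz.2)
    (convex_halfSpace_lt f.isLinear (f p)) hmem

/-! ### The five points -/

/-- Hexagonal coordinates of the five points: perturbed versions of the centre and of four
consecutive vertices of the regular hexagon with vertices `e^{ijπ/3}`. -/
def spiralCoord (e : ℝ) : Fin 5 → ℝ × ℝ :=
  ![(0, 0), (2 * e, -1 + 5 * e), (1 - 3 * e, -1 + 4 * e), (1 - 2 * e, e), (-e, 1 + e)]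

/-- Entry `(j, i)` with `i < j` gives the `i`-th of the five points as seen from the `j`-th one, in
hexagonal coordinates rotated by `jπ/3`. The remaining entries carry no meaning. -/
def spiralFrameCoord (e : ℝ) : Matrix (Fin 5) (Fin 5) (ℝ × ℝ) :=
  !![0, 0, 0, 0, 0;
    (1 - 7 * e, 2 * e), 0, 0, 0, 0;
    (1 - 4 * e, e), (e, 1 - 6 * e), 0, 0, 0;
    (1 - 2 * e, e), (1 - 4 * e, 1 - 4 * e), (e, 1 - 3 * e), 0, 0;
    (1, e), (2 - 7 * e, 3 * e), (1 - e, 1 - 2 * e), (e, 1 - e), 0]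

lemma hexRotate_iterate_spiralCoord_sub (e : ℝ) {i j : Fin 5} (hij : i < j) :
    hexRotate^[j] (spiralCoord e i - spiralCoord e j) = spiralFrameCoord e j i := by
  fin_cases i <;> fin_cases j <;> first | exact absurd hij (by decide) | ext <;>
    simp [spiralCoord, spiralFrameCoord, hexRotate] <;> ring

lemma hexPoint_spiralCoord_sub (e : ℝ) {i j : Fin 5} (hij : i < j) :
    hexPoint (spiralCoord e i) - hexPoint (spiralCoord e j) =
      hexUnit ^ (j : ℕ) * hexPoint (spiralFrameCoord e j i) := by
  rw [hexPoint_sub_eq j, hexRotate_iterate_spiralCoord_sub e hij]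

lemma dist_hexPoint_spiralCoord (e : ℝ) {i j : Fin 5} (hij : i < j) :
    dist (hexPoint (spiralCoord e i)) (hexPoint (spiralCoord e j)) =
      ‖hexPoint (spiralFrameCoord e j i)‖ := by
  rw [dist_eq_norm, hexPoint_spiralCoord_sub e hij, norm_mul, norm_pow, norm_hexUnit, one_pow,
    one_mul]

lemma dist_hexPoint_spiralCoord_zero_last_le {e : ℝ} (he : 0 ≤ e) :
    dist (hexPoint (spiralCoord e 0)) (hexPoint (spiralCoord e (Fin.last 4))) ≤ 1 + e := by
  have hframe : spiralFrameCoord e (Fin.last 4) 0 = (1, e) := rfl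
  rw [dist_hexPoint_spiralCoord e (by decide), hframe]
  simpa [abs_of_nonneg he] using norm_hexPoint_le (1, e)

section

variable {e : ℝ}

lemma spiralFrameCoord_pos (he : e ∈ Set.Ioo 0 (1 / 20)) {i j : Fin 5} (hij : i < j) :
    0 < (spiralFrameCoord e j i).1 ∧ 0 < (spiralFrameCoord e j i).2 := by
  obtain ⟨he₀, he₁⟩ := he
  fin_cases i <;> fin_cases j <;> first | exact absurd hij (by decide) | constructor <;>
    simp [spiralFrameCoord] <;> linarith

lemma projDist_hexPoint_spiralCoord (he : e ∈ Set.Ioo 0 (1 / 20)) {i j : Fin 5} (hij : i < j) :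
    projDist (hexPoint (spiralCoord e j)) (hexPoint (spiralCoord e i)) =
      √3 / 2 * ((spiralFrameCoord e j i).1 + (spiralFrameCoord e j i).2) :=
  have hpos := spiralFrameCoord_pos he hij
  projDist_of_sub_eq hpos.1 hpos.2 (hexPoint_spiralCoord_sub e hij)

lemma isSpiral_hexPoint_spiralCoord (he : e ∈ Set.Ioo 0 (1 / 20)) :
    IsSpiral (hexPoint ∘ spiralCoord e) where
  mem_openCone _ _ hij :=
    have hpos := spiralFrameCoord_pos he hij
    ⟨_, hpos.1, hpos.2, hexPoint_spiralCoord_sub e hij⟩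
  projDist_lt i j hij := by
    simp only [Function.comp_apply]
    rw [projDist_hexPoint_spiralCoord he j.castSucc_lt_succ,
      projDist_hexPoint_spiralCoord he (Fin.castSucc_lt_succ_iff.2 hij.le),
      mul_lt_mul_iff_right₀ (by positivity)]
    obtain ⟨he₀, he₁⟩ := he
    fin_cases i <;> fin_cases j <;> first | exact absurd hij (by decide) |
      (simp [spiralFrameCoord]; linarith)

lemma exists_forall_lt_spiralCoord (he : e ∈ Set.Ioo 0 (1 / 20)) (i : Fin 5) :
    ∃ a b : ℝ, ∀ j ≠ i,
      a * (spiralCoord e j).1 + b * (spiralCoord e j).2 <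
        a * (spiralCoord e i).1 + b * (spiralCoord e i).2 := by
  obtain ⟨he₀, he₁⟩ := he
  refine ⟨![-1, -1, 1, 1, 0] i, ![-(3 / 2) * e, -1, -1, 0, 1] i, fun j hj => ?_⟩
  fin_cases i <;> fin_cases j <;> first | exact absurd rfl hj | simp [spiralCoord] <;> nlinarith

lemma convexPos_hexPoint_spiralCoord (he : e ∈ Set.Ioo 0 (1 / 20)) :
    ConvexPos (Finset.univ.image (hexPoint ∘ spiralCoord e)) := by
  intro p hp
  obtain ⟨i, -, rfl⟩ := Finset.mem_image.1 hp
  obtain ⟨a, b, hab⟩ := exists_forall_lt_spiralCoord he i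
  refine mem_extremePoints_convexHull_of_forall_lt hp
    ((a • LinearMap.fst ℝ ℝ ℝ + b • LinearMap.snd ℝ ℝ ℝ) ∘ₗ hexPoint.symm) fun q hq hqi => ?_
  obtain ⟨j, -, rfl⟩ := Finset.mem_image.1 hq
  simpa using hab j (ne_of_apply_ne _ hqi)

lemma le_dist_hexPoint_spiralCoord_succ (he : e ∈ Set.Ioo 0 (1 / 20)) (i : Fin 4) :
    1 - 7 * e ≤ dist (hexPoint (spiralCoord e i.castSucc)) (hexPoint (spiralCoord e i.succ)) := by
  obtain ⟨h₁, h₂⟩ := spiralFrameCoord_pos he i.castSucc_lt_succ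
  have hmax : 1 - 7 * e ≤ max (spiralFrameCoord e i.succ i.castSucc).1
      (spiralFrameCoord e i.succ i.castSucc).2 := by
    have he₀ := he.1
    rw [le_max_iff]
    fin_cases i <;> simp [spiralFrameCoord] <;> grind
  rw [dist_hexPoint_spiralCoord e i.castSucc_lt_succ]
  exact hmax.trans (max_le_norm_hexPoint h₁.le h₂.le)

lemma le_pathLength_hexPoint_spiralCoord (he : e ∈ Set.Ioo 0 (1 / 20)) {p : List ℂ}
    (hp : IsPath (TTAdj (Finset.univ.image (hexPoint ∘ spiralCoord e)))
      (hexPoint (spiralCoord e 0)) (hexPoint (spiralCoord e (Fin.last 4))) p) :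
    4 * (1 - 7 * e) ≤ pathLength p :=
  calc 4 * (1 - 7 * e) = ∑ _i : Fin 4, (1 - 7 * e) := by
        rw [Fin.sum_const, nsmul_eq_mul, Nat.cast_ofNat]
    _ ≤ ∑ i : Fin 4, dist (hexPoint (spiralCoord e i.castSucc)) (hexPoint (spiralCoord e i.succ)) :=
      Finset.sum_le_sum fun i _ => le_dist_hexPoint_spiralCoord_succ he i
    _ ≤ pathLength p :=
      (isSpiral_hexPoint_spiralCoord he).sum_dist_le_pathLength (by norm_num) hp

end

lemma exists_convexPos_genPos_forall_isPath_le {ε : ℝ} (hε : 0 < ε) :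
    ∃ S : Finset ℂ, ConvexPos S ∧ GenPos S ∧ ∃ u ∈ S, ∃ v ∈ S, u ≠ v ∧
      ∀ p : List ℂ, IsPath (TTAdj S) u v p → (4 - ε) * dist u v ≤ pathLength p := by
  obtain ⟨e, he, heε⟩ : ∃ e ∈ Set.Ioo (0 : ℝ) (1 / 20), 32 * e ≤ ε := by
    refine ⟨min (ε / 32) (1 / 40), ⟨by positivity, ?_⟩, ?_⟩
    · exact (min_le_right _ _).trans_lt (by norm_num)
    · linarith [min_le_left (ε / 32) (1 / 40)]
  have hspiral := isSpiral_hexPoint_spiralCoord he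
  refine ⟨Finset.univ.image (hexPoint ∘ spiralCoord e), convexPos_hexPoint_spiralCoord he,
    hspiral.genPos, hexPoint (spiralCoord e 0), Finset.mem_image_of_mem _ (Finset.mem_univ _),
    hexPoint (spiralCoord e (Fin.last 4)), Finset.mem_image_of_mem _ (Finset.mem_univ _),
    hspiral.injective.ne (by decide), fun p hp => ?_⟩
  set d := dist (hexPoint (spiralCoord e 0)) (hexPoint (spiralCoord e (Fin.last 4)))
  calc (4 - ε) * d ≤ (4 - 32 * e) * d := by gcongr
    _ ≤ (4 - 32 * e) * (1 + e) := by
      gcongr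
      · linarith [he.2]
      · exact dist_hexPoint_spiralCoord_zero_last_le he.1.le
    _ ≤ 4 * (1 - 7 * e) := by nlinarith [sq_nonneg e]
    _ ≤ pathLength p := le_pathLength_hexPoint_spiralCoord he hp

/-- For every `ε > 0` there is a finite set `S` in convex and general
position and `u, v ∈ S` such that every path between `u` and `v` in `ΘΘ₆(S)` has length at
least `(4 - ε)·|uv|`; in particular no `t < 4` makes `ΘΘ₆` a `t`-spanner for all such sets. -/
theorem thetaTheta6_convex_lower_bound_four :
    (∀ ε : ℝ, 0 < ε → ∃ S : Finset ℂ, ConvexPos S ∧ GenPos S ∧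
      ∃ u ∈ S, ∃ v ∈ S, u ≠ v ∧
        ∀ p : List ℂ, IsPath (TTAdj S) u v p → (4 - ε) * dist u v ≤ pathLength p) ∧
    (∀ t : ℝ, t < 4 →
      ¬ ∀ S : Finset ℂ, ConvexPos S → GenPos S → ∀ u ∈ S, ∀ v ∈ S,
          ∃ p : List ℂ, IsPath (TTAdj S) u v p ∧ pathLength p ≤ t * dist u v) := by
  refine ⟨fun ε => exists_convexPos_genPos_forall_isPath_le, fun t ht hspanner => ?_⟩
  obtain ⟨S, hconvex, hgen, u, hu, v, hv, huv, hstretch⟩ :=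
    exists_convexPos_genPos_forall_isPath_le (half_pos (sub_pos.2 ht))
  obtain ⟨p, hp, hle⟩ := hspanner S hconvex hgen u hu v hv
  refine hle.not_gt (lt_of_lt_of_le ?_ (hstretch p hp))
  have hdist : 0 < dist u v := dist_pos.2 huv
  gcongr
  linarith

end
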